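/- Fix ℓ₀ > 0, T ∈ (0, ∞], and let Φ : [0, T) × [−ℓ₀/2, ℓ₀/2] → ℝ be a C^{1,4} solution of the Kuramoto–Sivashinsky equation Φ_τ = −3Φ_ηηηη − Φ_ηη − (1/2)(Φ_η)² satisfying the periodic boundary conditions D_η^{(k)}Φ(τ,−ℓ₀/2) = D_η^{(k)}Φ(τ,ℓ₀/2) for k = 0,1,2,3 and Φ(0,·) = Φ₀. Let Π(Φ(τ,·)) = (1/ℓ₀)∫_{−ℓ₀/2}^{ℓ₀/2} Φ(τ,η) dη denote the average. Then for every τ ∈ [0, T) and every η ∈ [−ℓ₀/2, ℓ₀/2], |Φ(τ,η) − Π(Φ(τ,·))| ≤ √ℓ₀ · e^{13τ/6} · ‖Φ₀'‖₂, where ‖f‖₂² = ∫_{−ℓ₀/2}^{ℓ₀/2} f(η)² dη. -/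

import Mathlib

open Set

/-- The spatial interval `[−ℓ₀/2, ℓ₀/2]`. -/
def Iℓ (ℓ₀ : ℝ) : Set ℝ := Icc (-(ℓ₀ / 2)) (ℓ₀ / 2)

/-- The time interval `[0, T)`, where `T ∈ (0, ∞]` is an extended real number. -/
def ksDom (T : EReal) : Set ℝ := {τ : ℝ | 0 ≤ τ ∧ (τ : EReal) < T}

/-- `Φ : [0,T) × [−ℓ₀/2, ℓ₀/2] → ℝ` is a `C^{1,4}` solution of the Kuramoto–Sivashinsky
equation `Φ_τ = −3Φ_ηηηη − Φ_ηη − (1/2)(Φ_η)²` with `ℓ₀`-periodic boundary conditions;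
`Φτ` is the time derivative and `D j` the `j`-th spatial derivative (`D 0 = Φ`), all
jointly continuous on the domain. -/
def IsKSSolutionOn (ℓ₀ : ℝ) (T : EReal) (Φ Φτ : ℝ → ℝ → ℝ) (D : ℕ → ℝ → ℝ → ℝ) : Prop :=
  D 0 = Φ ∧
  (∀ τ ∈ ksDom T, ∀ η ∈ Iℓ ℓ₀,
    HasDerivWithinAt (fun t => Φ t η) (Φτ τ η) (ksDom T) τ) ∧
  (∀ j < 4, ∀ τ ∈ ksDom T, ∀ η ∈ Iℓ ℓ₀,
    HasDerivWithinAt (fun y => D j τ y) (D (j + 1) τ η) (Iℓ ℓ₀) η) ∧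
  ContinuousOn (fun p : ℝ × ℝ => Φτ p.1 p.2) (ksDom T ×ˢ Iℓ ℓ₀) ∧
  (∀ j ≤ 4, ContinuousOn (fun p : ℝ × ℝ => D j p.1 p.2) (ksDom T ×ˢ Iℓ ℓ₀)) ∧
  (∀ τ ∈ ksDom T, ∀ η ∈ Iℓ ℓ₀,
    Φτ τ η = -3 * D 4 τ η - D 2 τ η - 1 / 2 * (D 1 τ η) ^ 2) ∧
  (∀ τ ∈ ksDom T, ∀ j ≤ 3, D j τ (-(ℓ₀ / 2)) = D j τ (ℓ₀ / 2))

/-!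
For a periodic solution of `∂ₜu = -α ∂ₓ⁴u - β ∂ₓ²u - N(∂ₓu)` with `α > 0`, the energy
`E = ∫ (∂ₓu)²` satisfies
`E' = -2 ∫ ∂ₜu ∂ₓ²u = 2β ∫ (∂ₓ²u)² - 2α ∫ (∂ₓ³u)²`,
the nonlinearity contributing the integral of the exact derivative `N(∂ₓu) ∂ₓ²u`. Since
`∫ (∂ₓ²u)² = -∫ ∂ₓu ∂ₓ³u`, Young's inequality absorbs the first term into the second and leaves
`E' ≤ β²/(2α) E`, so `√E` grows at most like `exp (β² t / (4α))` by Grönwall. The fundamental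
theorem of calculus and Cauchy–Schwarz bound the oscillation of `u`, hence its deviation from the
average, by `√((b - a) E)`. For the Kuramoto–Sivashinsky equation `α = 3` and `β = 1`, so the
growth rate is `1/12 ≤ 13/6`.
-/

open Filter Function MeasureTheory Topology
open scoped Interval

section Average

variable {a b : ℝ}

lemma sq_intervalIntegral_le {f : ℝ → ℝ} (hf : IntervalIntegrable f volume a b)
    (hf2 : IntervalIntegrable (fun x => f x ^ 2) volume a b) :
    (∫ x in a..b, f x) ^ 2 ≤ (b - a) * ∫ x in a..b, f x ^ 2 := by
  rcases eq_or_ne a b with rfl | hab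
  · simp
  have hba : b - a ≠ 0 := sub_ne_zero.2 hab.symm
  have jensen : (⨍ x in a..b, f x) ^ 2 ≤ ⨍ x in a..b, f x ^ 2 :=
    (even_two.convexOn_pow (𝕜 := ℝ)).map_set_average_le (by fun_prop) isClosed_univ
      (by simpa [sub_eq_zero] using hab.symm) (by simp) (by simp) hf.def' hf2.def'
  calc (∫ x in a..b, f x) ^ 2 = (b - a) ^ 2 * (⨍ x in a..b, f x) ^ 2 := by
        rw [interval_average_eq_div]; field_simp
    _ ≤ (b - a) ^ 2 * ⨍ x in a..b, f x ^ 2 := by gcongr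
    _ = (b - a) * ∫ x in a..b, f x ^ 2 := by
        rw [interval_average_eq_div]; field_simp

lemma norm_sub_intervalAverage_le {E : Type*} [NormedAddCommGroup E] [NormedSpace ℝ E]
    [CompleteSpace E] {f : ℝ → E} {c : E} {C : ℝ} (hab : a ≠ b)
    (hf : IntervalIntegrable f volume a b) (hC : ∀ x ∈ Ι a b, ‖c - f x‖ ≤ C) :
    ‖c - ⨍ x in a..b, f x‖ ≤ C := by
  have mem_closedBall : ⨍ x in a..b, f x ∈ Metric.closedBall c C :=
    (convex_closedBall c C).set_average_mem Metric.isClosed_closedBall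
      (by simpa [sub_eq_zero] using hab.symm) (by simp)
      (ae_restrict_of_forall_mem measurableSet_uIoc fun x hx => by
        exact mem_closedBall_iff_norm'.2 (hC x hx)) hf.def'
  exact mem_closedBall_iff_norm'.1 mem_closedBall

lemma intervalIntegral_eq_sub_of_hasDerivWithinAt {E : Type*} [NormedAddCommGroup E]
    [NormedSpace ℝ E] [CompleteSpace E] {f f' : ℝ → E}
    (hf : ∀ x ∈ [[a, b]], HasDerivWithinAt f (f' x) [[a, b]] x)
    (hf' : IntervalIntegrable f' volume a b) : ∫ x in a..b, f' x = f b - f a :=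
  intervalIntegral.integral_eq_sub_of_hasDeriv_right (HasDerivWithinAt.continuousOn hf)
    (fun x hx => ((hf x (mem_Icc_of_Ioo hx)).hasDerivAt
      (Icc_mem_nhds hx.1 hx.2)).hasDerivWithinAt) hf'

lemma sq_sub_le_mul_integral_sq_deriv {u u' : ℝ → ℝ}
    (hu : ∀ x ∈ [[a, b]], HasDerivWithinAt u (u' x) [[a, b]] x)
    (hu' : ContinuousOn u' [[a, b]]) {x y : ℝ} (hx : x ∈ [[a, b]]) (hy : y ∈ [[a, b]]) :
    (u y - u x) ^ 2 ≤ (b - a) * ∫ z in a..b, u' z ^ 2 := by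
  have hsub : [[x, y]] ⊆ [[a, b]] := uIcc_subset_uIcc hx hy
  have hu'xy : ContinuousOn u' [[x, y]] := hu'.mono hsub
  calc (u y - u x) ^ 2 = (∫ z in x..y, u' z) ^ 2 := by
        rw [intervalIntegral_eq_sub_of_hasDerivWithinAt
          (fun z hz => (hu z (hsub hz)).mono hsub) hu'xy.intervalIntegrable]
    _ ≤ (y - x) * ∫ z in x..y, u' z ^ 2 :=
        sq_intervalIntegral_le hu'xy.intervalIntegrable (hu'xy.pow 2).intervalIntegrable
    _ ≤ |y - x| * |∫ z in x..y, u' z ^ 2| := by rw [← abs_mul]; exact le_abs_self _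
    _ ≤ |b - a| * |∫ z in a..b, u' z ^ 2| := by
        gcongr ?_ * ?_
        · exact abs_sub_le_of_uIcc_subset_uIcc hsub
        · exact intervalIntegral.abs_integral_mono_interval
            (uIoc_subset_uIoc_of_uIcc_subset_uIcc hsub)
            (Eventually.of_forall fun z => sq_nonneg (u' z)) (hu'.pow 2).intervalIntegrable
    _ = (b - a) * ∫ z in a..b, u' z ^ 2 := by
        rw [← abs_mul, abs_of_nonneg]
        exact (sq_nonneg _).trans
          (sq_intervalIntegral_le hu'.intervalIntegrable (hu'.pow 2).intervalIntegrable)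

lemma abs_sub_intervalAverage_le_sqrt_integral_sq_deriv (hab : a < b) {u u' : ℝ → ℝ}
    (hu : ∀ x ∈ [[a, b]], HasDerivWithinAt u (u' x) [[a, b]] x)
    (hu' : ContinuousOn u' [[a, b]]) {x : ℝ} (hx : x ∈ [[a, b]]) :
    |u x - ⨍ y in a..b, u y| ≤ √(b - a) * √(∫ y in a..b, u' y ^ 2) := by
  refine norm_sub_intervalAverage_le hab.ne
    (HasDerivWithinAt.continuousOn hu).intervalIntegrable fun y hy => ?_
  rw [← Real.sqrt_mul (sub_nonneg.2 hab.le)]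
  exact Real.abs_le_sqrt (sq_sub_le_mul_integral_sq_deriv hu hu' (uIoc_subset_uIcc hy) hx)

end Average

lemma le_mul_exp_of_deriv_le_mul {a b K : ℝ} {f f' : ℝ → ℝ}
    (hf : ∀ t ∈ Icc a b, HasDerivWithinAt f (f' t) (Icc a b) t)
    (hf' : ∀ t ∈ Icc a b, f' t ≤ K * f t) {t : ℝ} (ht : t ∈ Icc a b) :
    f t ≤ f a * Real.exp (K * (t - a)) := by
  rw [← gronwallBound_ε0]
  refine le_gronwallBound_of_liminf_deriv_right_le (f' := f') (HasDerivWithinAt.continuousOn hf)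
    (fun s hs r hr => ?_) le_rfl (fun s hs => ?_) t ht
  · exact ((hf s (Ico_subset_Icc_self hs)).mono_of_mem_nhdsWithin
      (Icc_mem_nhdsGE_of_mem hs)).liminf_right_slope_le hr
  · simpa using hf' s (Ico_subset_Icc_self hs)

section PeriodicIntegrals

variable {a b : ℝ}

lemma integral_mul_deriv_eq_neg_of_periodic {A : Type*} [NormedRing A] [NormedAlgebra ℝ A]
    [CompleteSpace A] {u v u' v' : ℝ → A}
    (hu : ∀ x ∈ [[a, b]], HasDerivWithinAt u (u' x) [[a, b]] x)
    (hv : ∀ x ∈ [[a, b]], HasDerivWithinAt v (v' x) [[a, b]] x)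
    (hu' : IntervalIntegrable u' volume a b) (hv' : IntervalIntegrable v' volume a b)
    (hua : u a = u b) (hva : v a = v b) :
    ∫ x in a..b, u x * v' x = -∫ x in a..b, u' x * v x := by
  rw [intervalIntegral.integral_mul_deriv_eq_deriv_mul_of_hasDerivWithinAt hu hv hu' hv', hua, hva,
    sub_self, zero_sub]

lemma integral_comp_mul_deriv_eq_zero_of_periodic {f f' g : ℝ → ℝ}
    (hf : ∀ x ∈ [[a, b]], HasDerivWithinAt f (f' x) [[a, b]] x)
    (hf' : ContinuousOn f' [[a, b]]) (hg : ContinuousOn g (f '' [[a, b]])) (hfa : f a = f b) :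
    ∫ x in a..b, g (f x) * f' x = 0 := by
  have substitution : ∫ x in a..b, (g ∘ f) x * f' x = ∫ y in f a..f b, g y :=
    intervalIntegral.integral_comp_mul_deriv'' (HasDerivWithinAt.continuousOn hf)
      (fun x hx => ((hf x (mem_Icc_of_Ioo hx)).hasDerivAt
        (Icc_mem_nhds hx.1 hx.2)).hasDerivWithinAt) hf' hg
  simpa [hfa] using substitution

lemma integral_sq_deriv_eq_neg_of_periodic {w w' w'' : ℝ → ℝ}
    (hw : ∀ x ∈ [[a, b]], HasDerivWithinAt w (w' x) [[a, b]] x)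
    (hw' : ∀ x ∈ [[a, b]], HasDerivWithinAt w' (w'' x) [[a, b]] x)
    (hw'' : IntervalIntegrable w'' volume a b) (hwa : w a = w b) (hwa' : w' a = w' b) :
    ∫ x in a..b, w' x ^ 2 = -∫ x in a..b, w x * w'' x := by
  rw [integral_mul_deriv_eq_neg_of_periodic hw hw'
    (HasDerivWithinAt.continuousOn hw').intervalIntegrable hw'' hwa hwa', neg_neg]
  simp only [sq]

lemma integral_sq_deriv_le_of_periodic {α : ℝ} (hα : 0 < α) (β : ℝ) (hab : a ≤ b)
    {w w' w'' : ℝ → ℝ}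
    (hw : ∀ x ∈ [[a, b]], HasDerivWithinAt w (w' x) [[a, b]] x)
    (hw' : ∀ x ∈ [[a, b]], HasDerivWithinAt w' (w'' x) [[a, b]] x)
    (hw'' : ContinuousOn w'' [[a, b]]) (hwa : w a = w b) (hwa' : w' a = w' b) :
    2 * β * ∫ x in a..b, w' x ^ 2 ≤
      2 * α * (∫ x in a..b, w'' x ^ 2) + β ^ 2 / (2 * α) * ∫ x in a..b, w x ^ 2 := by
  have cont_w : ContinuousOn w [[a, b]] := HasDerivWithinAt.continuousOn hw
  have young : ∀ x, -(2 * β) * (w x * w'' x) ≤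
      2 * α * w'' x ^ 2 + β ^ 2 / (2 * α) * w x ^ 2 := fun x => by
    have square : 2 * α * w'' x ^ 2 + β ^ 2 / (2 * α) * w x ^ 2 - -(2 * β) * (w x * w'' x) =
        2 * α * (w'' x + β / (2 * α) * w x) ^ 2 := by field_simp; ring
    rw [← sub_nonneg, square]
    positivity
  calc 2 * β * ∫ x in a..b, w' x ^ 2 = ∫ x in a..b, -(2 * β) * (w x * w'' x) := by
        rw [integral_sq_deriv_eq_neg_of_periodic hw hw' hw''.intervalIntegrable hwa hwa',
          intervalIntegral.integral_const_mul]
        ring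
    _ ≤ ∫ x in a..b, (2 * α * w'' x ^ 2 + β ^ 2 / (2 * α) * w x ^ 2) :=
        intervalIntegral.integral_mono hab (ContinuousOn.intervalIntegrable (by fun_prop))
          (ContinuousOn.intervalIntegrable (by fun_prop)) young
    _ = 2 * α * (∫ x in a..b, w'' x ^ 2) + β ^ 2 / (2 * α) * ∫ x in a..b, w x ^ 2 := by
        rw [intervalIntegral.integral_add (ContinuousOn.intervalIntegrable (by fun_prop))
          (ContinuousOn.intervalIntegrable (by fun_prop)),
          intervalIntegral.integral_const_mul, intervalIntegral.integral_const_mul]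

lemma integral_sq_deriv_sub_eq_of_periodic {u u' u'' v v' v'' : ℝ → ℝ}
    (hu : ∀ x ∈ [[a, b]], HasDerivWithinAt u (u' x) [[a, b]] x)
    (hu' : ∀ x ∈ [[a, b]], HasDerivWithinAt u' (u'' x) [[a, b]] x)
    (hv : ∀ x ∈ [[a, b]], HasDerivWithinAt v (v' x) [[a, b]] x)
    (hv' : ∀ x ∈ [[a, b]], HasDerivWithinAt v' (v'' x) [[a, b]] x)
    (hu'' : IntervalIntegrable u'' volume a b) (hv'' : IntervalIntegrable v'' volume a b)
    (hua : u a = u b) (hua' : u' a = u' b) (hva : v a = v b) (hva' : v' a = v' b) :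
    (∫ x in a..b, u' x ^ 2) - ∫ x in a..b, v' x ^ 2 =
      -∫ x in a..b, (u x - v x) * (u'' x + v'' x) := by
  have cont_u' : ContinuousOn u' [[a, b]] := HasDerivWithinAt.continuousOn hu'
  have cont_v' : ContinuousOn v' [[a, b]] := HasDerivWithinAt.continuousOn hv'
  have by_parts : ∫ x in a..b, (u x - v x) * (u'' x + v'' x) =
      -∫ x in a..b, (u' x - v' x) * (u' x + v' x) :=
    integral_mul_deriv_eq_neg_of_periodic (fun x hx => (hu x hx).sub (hv x hx))
      (fun x hx => (hu' x hx).add (hv' x hx)) (cont_u'.sub cont_v').intervalIntegrable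
      (hu''.add hv'') (by simp only [hua, hva]) (by simp only [hua', hva'])
  rw [by_parts, neg_neg, ← intervalIntegral.integral_sub
    (ContinuousOn.intervalIntegrable (by fun_prop)) (ContinuousOn.intervalIntegrable (by fun_prop))]
  exact intervalIntegral.integral_congr fun x _ => by ring

end PeriodicIntegrals

section TimeDerivative

lemma norm_slope_le_of_norm_hasDerivWithinAt_le {𝕜 E : Type*} [RCLike 𝕜] [NormedAddCommGroup E]
    [NormedSpace 𝕜 E] {f f' : 𝕜 → E} {s : Set 𝕜} {C : ℝ} (hs : Convex ℝ s)
    (hf : ∀ t ∈ s, HasDerivWithinAt f (f' t) s t) (hC : ∀ t ∈ s, ‖f' t‖ ≤ C)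
    {t r : 𝕜} (ht : t ∈ s) (hr : r ∈ s) : ‖slope f t r‖ ≤ C := by
  rcases eq_or_ne r t with rfl | hrt
  · simpa using (norm_nonneg _).trans (hC r hr)
  rw [slope_def_module, norm_smul, norm_inv, inv_mul_le_iff₀ (norm_pos_iff.2 (sub_ne_zero.2 hrt)),
    mul_comm]
  exact hs.norm_image_sub_le_of_norm_hasDerivWithin_le hf hC ht hr

variable {a b t : ℝ} {s : Set ℝ} {u ut : ℝ → ℝ → ℝ}

lemma tendsto_integral_slope_mul {g : ℝ → ℝ → ℝ} (hs : Convex ℝ s) (hsc : IsCompact s)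
    (hut : ∀ t ∈ s, ∀ x ∈ [[a, b]], HasDerivWithinAt (fun r => u r x) (ut t x) s t)
    (hu : ∀ t ∈ s, ContinuousOn (u t) [[a, b]])
    (hut_cont : ContinuousOn (uncurry ut) (s ×ˢ [[a, b]]))
    (hg : ContinuousOn (uncurry g) (s ×ˢ [[a, b]])) (ht : t ∈ s) :
    Tendsto (fun r => ∫ x in a..b, slope (fun r => u r x) t r * g r x) (𝓝[s \ {t}] t)
      (𝓝 (∫ x in a..b, ut t x * g t x)) := by
  have compact : IsCompact (s ×ˢ [[a, b]]) := hsc.prod isCompact_uIcc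
  obtain ⟨M, hM⟩ := compact.exists_bound_of_continuousOn hut_cont
  obtain ⟨L, hL⟩ := compact.exists_bound_of_continuousOn hg
  have mem_s : ∀ᶠ r in 𝓝[s \ {t}] t, r ∈ s :=
    eventually_mem_nhdsWithin.mono fun _ hr => hr.1
  refine intervalIntegral.tendsto_integral_filter_of_dominated_convergence (fun _ => M * L)
    ?measurable ?bound intervalIntegrable_const ?limit
  case measurable =>
    filter_upwards [mem_s] with r hr
    have cont_slope : ContinuousOn (fun x => slope (fun r => u r x) t r) [[a, b]] := by
      simp only [slope_def_module]
      exact ((hu r hr).sub (hu t ht)).const_smul (r - t)⁻¹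
    exact ((cont_slope.mul (hg.uncurry_left r hr)).mono
      uIoc_subset_uIcc).aestronglyMeasurable measurableSet_uIoc
  case bound =>
    filter_upwards [mem_s] with r hr
    refine Eventually.of_forall fun x hx => ?_
    have hx' : x ∈ [[a, b]] := uIoc_subset_uIcc hx
    exact norm_mul_le_of_le (norm_slope_le_of_norm_hasDerivWithinAt_le hs
      (fun τ hτ => hut τ hτ x hx') (fun τ hτ => hM (τ, x) ⟨hτ, hx'⟩) ht hr)
      (hL (r, x) ⟨hr, hx'⟩)
  case limit =>
    refine Eventually.of_forall fun x hx => ?_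
    have hx' : x ∈ [[a, b]] := uIoc_subset_uIcc hx
    exact (hasDerivWithinAt_iff_tendsto_slope.1 (hut t ht x hx')).mul
      ((hg.uncurry_right x hx' t ht).mono_left (nhdsWithin_mono t sdiff_subset))

/-- The mixed derivative `∂ₜ∂ₓu` need not exist, so one cannot differentiate under the integral
sign. Polarization and integration by parts move the time increment onto `u` itself. -/
lemma hasDerivWithinAt_integral_sq_deriv_of_periodic {ux uxx : ℝ → ℝ → ℝ} (hs : Convex ℝ s)
    (hsc : IsCompact s)
    (hut : ∀ t ∈ s, ∀ x ∈ [[a, b]], HasDerivWithinAt (fun r => u r x) (ut t x) s t)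
    (hux : ∀ t ∈ s, ∀ x ∈ [[a, b]], HasDerivWithinAt (u t) (ux t x) [[a, b]] x)
    (huxx : ∀ t ∈ s, ∀ x ∈ [[a, b]], HasDerivWithinAt (ux t) (uxx t x) [[a, b]] x)
    (hut_cont : ContinuousOn (uncurry ut) (s ×ˢ [[a, b]]))
    (huxx_cont : ContinuousOn (uncurry uxx) (s ×ˢ [[a, b]]))
    (hu_per : ∀ t ∈ s, u t a = u t b) (hux_per : ∀ t ∈ s, ux t a = ux t b) (ht : t ∈ s) :
    HasDerivWithinAt (fun r => ∫ x in a..b, ux r x ^ 2) (-2 * ∫ x in a..b, ut t x * uxx t x)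
      s t := by
  have uxx_integrable : ∀ r ∈ s, IntervalIntegrable (uxx r) volume a b := fun r hr =>
    (huxx_cont.uncurry_left r hr).intervalIntegrable
  have sum_cont : ContinuousOn (uncurry fun r x => uxx r x + uxx t x) (s ×ˢ [[a, b]]) :=
    huxx_cont.add ((huxx_cont.uncurry_left t ht).comp continuousOn_snd fun _ hp => hp.2)
  have limit := tendsto_integral_slope_mul hs hsc hut
    (fun r hr => HasDerivWithinAt.continuousOn (hux r hr)) hut_cont sum_cont ht
  have slope_energy : ∀ r ∈ s, slope (fun r => ∫ x in a..b, ux r x ^ 2) t r =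
      -∫ x in a..b, slope (fun r => u r x) t r * (uxx r x + uxx t x) := fun r hr => by
    simp only [slope_def_module, smul_eq_mul, mul_assoc, intervalIntegral.integral_const_mul]
    rw [integral_sq_deriv_sub_eq_of_periodic (hux r hr) (huxx r hr) (hux t ht) (huxx t ht)
      (uxx_integrable r hr) (uxx_integrable t ht) (hu_per r hr) (hux_per r hr) (hu_per t ht)
      (hux_per t ht), mul_neg]
  have deriv_value : -∫ x in a..b, ut t x * (uxx t x + uxx t x) =
      -2 * ∫ x in a..b, ut t x * uxx t x := by
    rw [neg_mul, ← intervalIntegral.integral_const_mul]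
    congr! 3
    ring
  rw [hasDerivWithinAt_iff_tendsto_slope, ← deriv_value]
  refine limit.neg.congr' ?_
  filter_upwards [self_mem_nhdsWithin] with r hr
  exact (slope_energy r hr.1).symm

end TimeDerivative

/-- `u 0` is a `C^{1,4}` solution on `s × [[a, b]]`, with periodic boundary conditions, of the
Kuramoto–Sivashinsky type equation `∂ₜu = -α ∂ₓ⁴u - β ∂ₓ²u - N(∂ₓu)`. As in `IsKSSolutionOn`, the
derivatives are part of the data: `u j` is the `j`-th spatial derivative and `ut` the time
derivative. -/
structure IsKSTypeSolutionOn (α β : ℝ) (N : ℝ → ℝ) (a b : ℝ) (s : Set ℝ)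
    (u : ℕ → ℝ → ℝ → ℝ) (ut : ℝ → ℝ → ℝ) : Prop where
  hasDerivWithinAt_time : ∀ t ∈ s, ∀ x ∈ [[a, b]],
    HasDerivWithinAt (fun r => u 0 r x) (ut t x) s t
  hasDerivWithinAt_space : ∀ j < 4, ∀ t ∈ s, ∀ x ∈ [[a, b]],
    HasDerivWithinAt (u j t) (u (j + 1) t x) [[a, b]] x
  continuousOn_time : ContinuousOn (uncurry ut) (s ×ˢ [[a, b]])
  continuousOn_space : ∀ j ≤ 4, ContinuousOn (uncurry (u j)) (s ×ˢ [[a, b]])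
  equation : ∀ t ∈ s, ∀ x ∈ [[a, b]], ut t x = -α * u 4 t x - β * u 2 t x - N (u 1 t x)
  periodic : ∀ t ∈ s, ∀ j ≤ 3, u j t a = u j t b

namespace IsKSTypeSolutionOn

variable {α β a b t : ℝ} {N : ℝ → ℝ} {s s' : Set ℝ} {u : ℕ → ℝ → ℝ → ℝ} {ut : ℝ → ℝ → ℝ}

lemma mono (h : IsKSTypeSolutionOn α β N a b s u ut) (hs : s' ⊆ s) :
    IsKSTypeSolutionOn α β N a b s' u ut where
  hasDerivWithinAt_time t ht x hx := (h.hasDerivWithinAt_time t (hs ht) x hx).mono hs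
  hasDerivWithinAt_space j hj t ht := h.hasDerivWithinAt_space j hj t (hs ht)
  continuousOn_time := h.continuousOn_time.mono (prod_mono_left hs)
  continuousOn_space j hj := (h.continuousOn_space j hj).mono (prod_mono_left hs)
  equation t ht := h.equation t (hs ht)
  periodic t ht := h.periodic t (hs ht)

lemma continuousOn_slice (h : IsKSTypeSolutionOn α β N a b s u ut) {j : ℕ} (hj : j ≤ 4)
    (ht : t ∈ s) : ContinuousOn (u j t) [[a, b]] :=
  (h.continuousOn_space j hj).uncurry_left t ht

lemma hasDerivWithinAt_energy (h : IsKSTypeSolutionOn α β N a b s u ut) (hs : Convex ℝ s)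
    (hsc : IsCompact s) (ht : t ∈ s) :
    HasDerivWithinAt (fun r => ∫ x in a..b, u 1 r x ^ 2) (-2 * ∫ x in a..b, ut t x * u 2 t x)
      s t :=
  hasDerivWithinAt_integral_sq_deriv_of_periodic hs hsc h.hasDerivWithinAt_time
    (h.hasDerivWithinAt_space 0 (by lia)) (h.hasDerivWithinAt_space 1 (by lia))
    h.continuousOn_time (h.continuousOn_space 2 (by lia)) (fun r hr => h.periodic r hr 0 (by lia))
    (fun r hr => h.periodic r hr 1 (by lia)) ht

lemma energy_production_eq (h : IsKSTypeSolutionOn α β N a b s u ut) (hN : Continuous N)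
    (ht : t ∈ s) :
    -2 * ∫ x in a..b, ut t x * u 2 t x =
      2 * β * (∫ x in a..b, u 2 t x ^ 2) - 2 * α * ∫ x in a..b, u 3 t x ^ 2 := by
  have cont₁ := h.continuousOn_slice (j := 1) (by lia) ht
  have cont₂ := h.continuousOn_slice (j := 2) (by lia) ht
  have cont₄ := h.continuousOn_slice (j := 4) (by lia) ht
  have nonlinear_term : ∫ x in a..b, N (u 1 t x) * u 2 t x = 0 :=
    integral_comp_mul_deriv_eq_zero_of_periodic (h.hasDerivWithinAt_space 1 (by lia) t ht) cont₂
      hN.continuousOn (h.periodic t ht 1 (by lia))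
  have dissipation : ∫ x in a..b, u 3 t x ^ 2 = -∫ x in a..b, u 2 t x * u 4 t x :=
    integral_sq_deriv_eq_neg_of_periodic (h.hasDerivWithinAt_space 2 (by lia) t ht)
      (h.hasDerivWithinAt_space 3 (by lia) t ht) cont₄.intervalIntegrable
      (h.periodic t ht 2 (by lia)) (h.periodic t ht 3 (by lia))
  have expand : ∫ x in a..b, ut t x * u 2 t x =
      ∫ x in a..b, (-α * (u 2 t x * u 4 t x) - β * u 2 t x ^ 2 - N (u 1 t x) * u 2 t x) :=
    intervalIntegral.integral_congr fun x hx => by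
      simp only [h.equation t ht x hx]
      ring
  rw [expand, intervalIntegral.integral_sub (ContinuousOn.intervalIntegrable (by fun_prop))
      (ContinuousOn.intervalIntegrable (by fun_prop)),
    intervalIntegral.integral_sub (ContinuousOn.intervalIntegrable (by fun_prop))
      (ContinuousOn.intervalIntegrable (by fun_prop)),
    intervalIntegral.integral_const_mul, intervalIntegral.integral_const_mul, nonlinear_term,
    dissipation]
  ring

lemma energy_production_le (h : IsKSTypeSolutionOn α β N a b s u ut) (hα : 0 < α) (hab : a ≤ b)
    (hN : Continuous N) (ht : t ∈ s) :
    -2 * ∫ x in a..b, ut t x * u 2 t x ≤ β ^ 2 / (2 * α) * ∫ x in a..b, u 1 t x ^ 2 := by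
  rw [h.energy_production_eq hN ht, sub_le_iff_le_add']
  exact integral_sq_deriv_le_of_periodic hα β hab (h.hasDerivWithinAt_space 1 (by lia) t ht)
    (h.hasDerivWithinAt_space 2 (by lia) t ht) (h.continuousOn_slice (by lia) ht)
    (h.periodic t ht 1 (by lia)) (h.periodic t ht 2 (by lia))

lemma energy_le {t₀ : ℝ} (h : IsKSTypeSolutionOn α β N a b (Icc t₀ t) u ut) (hα : 0 < α)
    (hab : a ≤ b) (hN : Continuous N) (ht : t₀ ≤ t) :
    ∫ x in a..b, u 1 t x ^ 2 ≤
      (∫ x in a..b, u 1 t₀ x ^ 2) * Real.exp (β ^ 2 / (2 * α) * (t - t₀)) :=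
  le_mul_exp_of_deriv_le_mul
    (fun _ hr => h.hasDerivWithinAt_energy (convex_Icc t₀ t) isCompact_Icc hr)
    (fun _ hr => h.energy_production_le hα hab hN hr) (right_mem_Icc.2 ht)

end IsKSTypeSolutionOn

theorem KS_deviation_bound_general {α β a b t₀ t x : ℝ} {N : ℝ → ℝ} {s : Set ℝ}
    {u : ℕ → ℝ → ℝ → ℝ} {ut : ℝ → ℝ → ℝ} (h : IsKSTypeSolutionOn α β N a b s u ut)
    (hα : 0 < α) (hab : a < b) (hN : Continuous N) (ht : t₀ ≤ t) (hs : Icc t₀ t ⊆ s)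
    (hx : x ∈ [[a, b]]) :
    |u 0 t x - ⨍ y in a..b, u 0 t y| ≤
      √(b - a) * Real.exp (β ^ 2 / (4 * α) * (t - t₀)) * √(∫ y in a..b, u 1 t₀ y ^ 2) := by
  have hts : t ∈ s := hs (right_mem_Icc.2 ht)
  have sqrt_exp : √(Real.exp (β ^ 2 / (2 * α) * (t - t₀))) =
      Real.exp (β ^ 2 / (4 * α) * (t - t₀)) := by
    rw [← Real.exp_half]
    congr 1
    ring
  calc |u 0 t x - ⨍ y in a..b, u 0 t y|
    _ ≤ √(b - a) * √(∫ y in a..b, u 1 t y ^ 2) :=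
        abs_sub_intervalAverage_le_sqrt_integral_sq_deriv hab
          (h.hasDerivWithinAt_space 0 (by lia) t hts) (h.continuousOn_slice (by lia) hts) hx
    _ ≤ √(b - a) * √((∫ y in a..b, u 1 t₀ y ^ 2) *
          Real.exp (β ^ 2 / (2 * α) * (t - t₀))) := by
        gcongr
        exact (h.mono hs).energy_le hα hab.le hN ht
    _ = √(b - a) * Real.exp (β ^ 2 / (4 * α) * (t - t₀)) * √(∫ y in a..b, u 1 t₀ y ^ 2) := by
        rw [Real.sqrt_mul' _ (Real.exp_pos _).le, sqrt_exp]
        ring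

lemma IsKSSolutionOn.isKSTypeSolutionOn {ℓ₀ : ℝ} {T : EReal} {Φ Φτ : ℝ → ℝ → ℝ}
    {D : ℕ → ℝ → ℝ → ℝ} (h : IsKSSolutionOn ℓ₀ T Φ Φτ D) (hℓ₀ : 0 ≤ ℓ₀) :
    IsKSTypeSolutionOn 3 1 (fun p => 1 / 2 * p ^ 2) (-(ℓ₀ / 2)) (ℓ₀ / 2) (ksDom T) D Φτ := by
  have interval_eq : [[-(ℓ₀ / 2), ℓ₀ / 2]] = Iℓ ℓ₀ := uIcc_of_le (by linarith)
  obtain ⟨rfl, time, space, cont_time, cont_space, equation, periodic⟩ := h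
  refine ⟨?_, ?_, ?_, ?_, ?_, periodic⟩ <;> rw [interval_eq]
  exacts [time, space, cont_time, cont_space, by simpa only [one_mul] using equation]

lemma Icc_zero_subset_ksDom {T : EReal} {τ : ℝ} (hτ : τ ∈ ksDom T) : Icc 0 τ ⊆ ksDom T :=
  fun _ ht => ⟨ht.1, (EReal.coe_le_coe_iff.2 ht.2).trans_lt hτ.2⟩

/-- estimate (I-P-sup): for any `C^{1,4}` solution of the
Kuramoto–Sivashinsky equation on `[0,T)`, the deviation of `Φ(τ,·)` from its spatial
average is bounded by `√ℓ₀ e^{13τ/6} ‖Φ₀'‖₂` (with `Φ₀' = D 1 0`). -/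
theorem KS_deviation_bound (ℓ₀ : ℝ) (T : EReal) (hℓ₀ : 0 < ℓ₀) (hT : 0 < T)
    (Φ Φτ : ℝ → ℝ → ℝ) (D : ℕ → ℝ → ℝ → ℝ)
    (hsol : IsKSSolutionOn ℓ₀ T Φ Φτ D) :
    ∀ τ ∈ ksDom T, ∀ η ∈ Iℓ ℓ₀,
      |Φ τ η - 1 / ℓ₀ * ∫ y in (-(ℓ₀ / 2))..(ℓ₀ / 2), Φ τ y| ≤
        Real.sqrt ℓ₀ * Real.exp (13 * τ / 6) *
          Real.sqrt (∫ y in (-(ℓ₀ / 2))..(ℓ₀ / 2), (D 1 0 y) ^ 2) := by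
  intro τ hτ η hη
  have hη' : η ∈ [[-(ℓ₀ / 2), ℓ₀ / 2]] := Icc_subset_uIcc hη
  have bound := KS_deviation_bound_general (hsol.isKSTypeSolutionOn hℓ₀.le) (by norm_num)
    (by linarith) (by fun_prop) hτ.1 (Icc_zero_subset_ksDom hτ) hη'
  rw [hsol.1, interval_average_eq, sub_neg_eq_add, add_halves, sub_zero, smul_eq_mul,
    ← one_div] at bound
  refine bound.trans ?_
  gcongr
  linarith [hτ.1]
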